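/- arXiv:1603.05944 — 4 statements merged into one kernel-verified Lean document; each statement's English description precedes it below -/
import Mathlib

section
/- There exists a constant c > 0 such that for infinitely many natural numbers n there exist a finite connected simple graph G on n vertices with maximum degree at most 3 and a walk w on G following the LRV-v policy whose cover time is at least 2^(c·n). (In particular, the least-recently-visited-vertex strategy can take time exponential in n to explore a graph of maximum degree 3, such as the dual graph of a triangulation of a polygonal region.) -/
/-!
A gadget with two leaf ports carries a periodic LRV-v walk that visits the left port twice for
every visit to the right port. In a chain of `m` gadgets, where the right port of each is the left
port of the next, let a walk change gadgets whenever it reaches a shared port. Each gadget then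
sees its own LRV-v walk, merely slowed down, and this makes the walk on the chain LRV-v. A gadget
leaves its left port at most once per visit of its predecessor to the right port, so the number of
visits to the left ports doubles from each gadget to its predecessor, and the far end of the chain
is reached only after `2 ^ m` steps.
-/

namespace LRV

section Walks

variable {V : Type*} {G : SimpleGraph V} {w : ℕ → V} {t : ℕ} {u v : V}

/-- Every visit of `w` to `u` up to time `t` is followed, at the same time or later but still up to
time `t`, by a visit to `v`. In particular this holds when `u` has not been visited yet. -/
def RevisitedSince (w : ℕ → V) (t : ℕ) (u v : V) : Prop :=
  ∀ t₁ ≤ t, w t₁ = u → ∃ t₂, t₁ ≤ t₂ ∧ t₂ ≤ t ∧ w t₂ = v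

/-- An infinite walk on `G` that always moves to a neighbour visited least recently. -/
structure IsLRVWalk (G : SimpleGraph V) (w : ℕ → V) : Prop where
  adj (t : ℕ) : G.Adj (w t) (w (t + 1))
  revisitedSince (t : ℕ) (u : V) (hu : G.Adj (w t) u) : RevisitedSince w t (w (t + 1)) u

theorem revisitedSince_self : RevisitedSince w t u (w t) :=
  fun _ ht₁ _ => ⟨t, ht₁, le_rfl, rfl⟩

theorem RevisitedSince.succ (h : RevisitedSince w t u v) (hu : w (t + 1) ≠ u) :
    RevisitedSince w (t + 1) u v := by
  intro t₁ ht₁ hw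
  have ht₁' : t₁ ≤ t := Nat.le_of_lt_succ (ht₁.lt_of_ne (by rintro rfl; exact hu hw))
  obtain ⟨t₂, h₁, h₂, h₃⟩ := h t₁ ht₁' hw
  exact ⟨t₂, h₁, h₂.trans (Nat.le_succ t), h₃⟩

theorem RevisitedSince.of_lag (d : ℕ) (hv : d ≤ t → w (t - d) = v)
    (hu : ∀ e < d, e ≤ t → w (t - e) ≠ u) : RevisitedSince w t u v := by
  intro t₁ ht₁ hw
  have hd : d ≤ t - t₁ := by
    by_contra! hlt
    exact hu _ hlt (Nat.sub_le _ _) (by rwa [Nat.sub_sub_self ht₁])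
  exact ⟨t - d, by omega, Nat.sub_le _ _, hv (by omega)⟩

/-- It suffices to look one period back from the times of the second period. -/
theorem isLRVWalk_of_periodic {c : ℕ} (hc : 0 < c) (hw : Function.Periodic w c)
    (hadj : ∀ p < c, G.Adj (w p) (w (p + 1)))
    (hlag : ∀ p < c, ∀ u, G.Adj (w p) u →
      ∃ d ≤ c, w (p + c - d) = u ∧ ∀ e < d, w (p + c - e) ≠ w (p + 1)) :
    IsLRVWalk G w := by
  have hsucc (t : ℕ) : w (t % c + 1) = w (t + 1) := by
    rw [← hw.map_mod_nat (t + 1), ← Nat.mod_add_mod, hw.map_mod_nat]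
  have hback {t e : ℕ} (hec : e ≤ c) (het : e ≤ t) : w (t % c + c - e) = w (t - e) := by
    have hshift : t % c + c - e + t / c * c = t - e + c := by
      have := Nat.mod_add_div' t c
      omega
    rw [← hw (t - e), ← hshift]
    exact (hw.nat_mul (t / c) _).symm
  refine ⟨fun t => ?_, fun t u hu => ?_⟩
  · simpa only [hw.map_mod_nat, hsucc] using hadj (t % c) (Nat.mod_lt _ hc)
  · obtain ⟨d, hdc, hd, hlt⟩ := hlag (t % c) (Nat.mod_lt _ hc) u (by rwa [hw.map_mod_nat])
    refine .of_lag d (fun hdt => by rw [← hback hdc hdt, hd]) fun e he het => ?_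
    rw [← hback (he.le.trans hdc) het, ← hsucc]
    exact hlt e he

end Walks

theorem count_mul_add_of_periodic {p : ℕ → Prop} [DecidablePred p] {c : ℕ}
    (hp : Function.Periodic p c) (q r : ℕ) :
    Nat.count p (c * q + r) = q * Nat.count p c + Nat.count p r := by
  induction q with
  | zero => simp
  | succ q ih =>
    have hshift : (fun s => p (c + s)) = p := by
      funext s
      rw [add_comm, hp]
    have hsplit : c * (q + 1) + r = c + (c * q + r) := by ring
    rw [hsplit, Nat.count_add]
    simp only [hshift, ih]
    ring

section Chain

variable {k m D : ℕ} {H : SimpleGraph (Fin (k + 1))} {i j : Fin m} {x y : Fin (k + 1)}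

/-- The inclusion of the `j`-th gadget into a chain of `m` gadgets on `Fin (k + 1)`, in which the
last vertex of each gadget is identified with vertex `0` of the next one. -/
def chainVertex (j : Fin m) : Fin (k + 1) ↪ Fin (k * m + 1) where
  toFun x := ⟨k * j + x, by
    have : k * (j + 1) ≤ k * m := Nat.mul_le_mul_left k j.isLt
    rw [Nat.mul_succ] at this
    omega⟩
  inj' x y hxy := by
    rw [Fin.mk.injEq] at hxy
    omega

@[simp]
theorem val_chainVertex : (chainVertex j x : ℕ) = k * j + x :=
  rfl

/-- The union of `m` copies of the gadget `H`, consecutive copies sharing one port. -/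
def chainGraph (H : SimpleGraph (Fin (k + 1))) (m : ℕ) : SimpleGraph (Fin (k * m + 1)) :=
  ⨆ j : Fin m, H.map (chainVertex j)

theorem chainGraph_adj {u v : Fin (k * m + 1)} : (chainGraph H m).Adj u v ↔
    ∃ j : Fin m, ∃ x y, H.Adj x y ∧ chainVertex j x = u ∧ chainVertex j y = v := by
  simp [chainGraph, SimpleGraph.iSup_adj, SimpleGraph.map_adj]

theorem chainVertex_last (hij : (i : ℕ) + 1 = j) :
    chainVertex i (Fin.last k) = chainVertex j 0 :=
  Fin.ext (by simp [← hij, Nat.mul_succ])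

theorem chainVertex_surjective [NeZero m] (v : Fin (k * m + 1)) :
    ∃ (j : Fin m) (x : Fin (k + 1)), chainVertex j x = v := by
  obtain hv | hv := (Nat.le_of_lt_succ v.isLt).lt_or_eq
  · have hk : 0 < k := Nat.pos_of_mul_pos_right (Nat.zero_lt_of_lt hv)
    exact ⟨⟨v / k, Nat.div_lt_of_lt_mul hv⟩, ⟨v % k, (Nat.mod_lt _ hk).trans (Nat.lt_succ_self k)⟩,
      Fin.ext (Nat.div_add_mod v k)⟩
  · obtain ⟨n, rfl⟩ := Nat.exists_eq_succ_of_ne_zero (NeZero.ne m)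
    exact ⟨Fin.last n, Fin.last k, Fin.ext (by simp [hv, Nat.mul_succ])⟩

theorem eq_of_chainVertex_eq_of_lt (hk : 0 < k) (hij : i < j)
    (h : chainVertex i x = chainVertex j y) : (i : ℕ) + 1 = j ∧ x = Fin.last k ∧ y = 0 := by
  obtain ⟨d, hd⟩ := Nat.exists_eq_add_of_lt hij
  have hval : k * i + x = k * i + (k * d + k) + y := by
    have := congrArg Fin.val h
    rw [val_chainVertex, val_chainVertex, hd] at this
    linarith
  have hx := x.isLt
  have hd0 : d = 0 := by
    by_contra hd0
    have := Nat.le_mul_of_pos_right k (Nat.pos_of_ne_zero hd0)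
    omega
  subst hd0
  exact ⟨by omega, Fin.ext (by rw [Fin.val_last]; omega), Fin.ext (by rw [Fin.val_zero]; omega)⟩

theorem chainVertex_eq_iff (hk : 0 < k) : chainVertex i x = chainVertex j y ↔
    (i = j ∧ x = y) ∨ ((i : ℕ) + 1 = j ∧ x = Fin.last k ∧ y = 0) ∨
      ((j : ℕ) + 1 = i ∧ x = 0 ∧ y = Fin.last k) := by
  constructor
  · intro h
    rcases lt_trichotomy i j with hij | rfl | hij
    · exact .inr (.inl (eq_of_chainVertex_eq_of_lt hk hij h))
    · exact .inl ⟨rfl, (chainVertex i).injective h⟩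
    · obtain ⟨h₁, h₂, h₃⟩ := eq_of_chainVertex_eq_of_lt hk hij h.symm
      exact .inr (.inr ⟨h₁, h₃, h₂⟩)
  · rintro (⟨rfl, rfl⟩ | ⟨h, rfl, rfl⟩ | ⟨h, rfl, rfl⟩)
    · rfl
    · exact chainVertex_last h
    · exact (chainVertex_last h).symm

theorem chainGraph_connected [NeZero m] (hH : H.Connected) : (chainGraph H m).Connected := by
  have hcopy (j : Fin m) (x y : Fin (k + 1)) :
      (chainGraph H m).Reachable (chainVertex j x) (chainVertex j y) :=
    (hH.preconnected x y).map
      ⟨chainVertex j, fun {x y} hxy => chainGraph_adj.mpr ⟨j, x, y, hxy, rfl, rfl⟩⟩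
  have hport (j : ℕ) (hj : j < m) :
      (chainGraph H m).Reachable (chainVertex (0 : Fin m) 0) (chainVertex ⟨j, hj⟩ 0) := by
    induction j with
    | zero => rfl
    | succ j ih =>
      rw [← chainVertex_last (i := ⟨j, Nat.lt_of_succ_lt hj⟩) (j := ⟨j + 1, hj⟩) rfl]
      exact (ih _).trans (hcopy _ _ _)
  refine SimpleGraph.connected_iff_exists_forall_reachable _ |>.mpr
    ⟨chainVertex (0 : Fin m) 0, fun v => ?_⟩
  obtain ⟨j, x, rfl⟩ := chainVertex_surjective v
  exact (hport j j.isLt).trans (hcopy j 0 x)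

theorem chainGraph_ncard_neighborSet_le_of_port (hk : 0 < k)
    (hleft : (H.neighborSet 0).Subsingleton) (hright : (H.neighborSet (Fin.last k)).Subsingleton)
    {x : Fin (k + 1)} (hx : x = 0 ∨ x = Fin.last k) (j : Fin m) :
    ((chainGraph H m).neighborSet (chainVertex j x)).ncard ≤ 2 := by
  let nbrs (z : Fin (k + 1)) : Set (Fin (k * m + 1)) :=
    {u | ∃ i : Fin m, chainVertex i z = chainVertex j x ∧ u ∈ chainVertex i '' H.neighborSet z}
  have hnbrs {z : Fin (k + 1)} (hz : (H.neighborSet z).Subsingleton) : (nbrs z).ncard ≤ 1 := by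
    refine Set.ncard_le_one_iff_subsingleton.mpr ?_
    rintro _ ⟨i, hi, ha⟩ _ ⟨i', hi', hb⟩
    obtain rfl : i = i' := by
      rcases (chainVertex_eq_iff hk).mp (hi.trans hi'.symm) with h | h | h
      · exact h.1
      all_goals
        have := h.2.1.symm.trans h.2.2
        simp [Fin.ext_iff] at this
        omega
    exact hz.image _ ha hb
  have hsub : (chainGraph H m).neighborSet (chainVertex j x) ⊆ nbrs 0 ∪ nbrs (Fin.last k) := by
    intro u hu
    obtain ⟨i, z, y, hzy, hz, rfl⟩ := chainGraph_adj.mp hu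
    have hport : z = 0 ∨ z = Fin.last k := by
      rcases (chainVertex_eq_iff hk).mp hz with h | h | h
      · rwa [h.2]
      · exact .inr h.2.1
      · exact .inl h.2.1
    rcases hport with rfl | rfl
    · exact .inl ⟨i, hz, y, hzy, rfl⟩
    · exact .inr ⟨i, hz, y, hzy, rfl⟩
  calc _ ≤ (nbrs 0 ∪ nbrs (Fin.last k)).ncard := Set.ncard_le_ncard hsub
    _ ≤ (nbrs 0).ncard + (nbrs (Fin.last k)).ncard := Set.ncard_union_le _ _
    _ ≤ 1 + 1 := Nat.add_le_add (hnbrs hleft) (hnbrs hright)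

theorem chainGraph_ncard_neighborSet_le [NeZero m] (hk : 0 < k)
    (hleft : (H.neighborSet 0).Subsingleton) (hright : (H.neighborSet (Fin.last k)).Subsingleton)
    (hD : 2 ≤ D) (hdeg : ∀ x, (H.neighborSet x).ncard ≤ D) (v : Fin (k * m + 1)) :
    ((chainGraph H m).neighborSet v).ncard ≤ D := by
  obtain ⟨j, x, rfl⟩ := chainVertex_surjective v
  by_cases hx : x = 0 ∨ x = Fin.last k
  · exact (chainGraph_ncard_neighborSet_le_of_port hk hleft hright hx j).trans hD
  · have hsub : (chainGraph H m).neighborSet (chainVertex j x) ⊆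
        chainVertex j '' H.neighborSet x := by
      intro u hu
      obtain ⟨i, z, y, hzy, hz, rfl⟩ := chainGraph_adj.mp hu
      obtain ⟨rfl, rfl⟩ : i = j ∧ z = x := by
        have := (chainVertex_eq_iff hk).mp hz
        tauto
      exact ⟨y, hzy, rfl⟩
    calc _ ≤ (chainVertex j '' H.neighborSet x).ncard := Set.ncard_le_ncard hsub
      _ ≤ (H.neighborSet x).ncard := Set.ncard_image_le
      _ ≤ D := hdeg x

end Chain

/-- A walk `h` on a gadget `H` that acts as one digit of a binary counter: the ports `0` and
`Fin.last k` are leaves, and whenever `h` is at the right port, the left port has been visited at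
least twice as often as the right one, the current visit included. -/
structure IsCounterGadget {k : ℕ} (H : SimpleGraph (Fin (k + 1))) (h : ℕ → Fin (k + 1)) :
    Prop where
  isLRVWalk : IsLRVWalk H h
  zero : h 0 = 0
  left_leaf : (H.neighborSet 0).Subsingleton
  right_leaf : (H.neighborSet (Fin.last k)).Subsingleton
  doubling (s : ℕ) (hs : h s = Fin.last k) :
    2 * (Nat.count (h · = Fin.last k) s + 1) ≤ Nat.count (h · = 0) s

/-- A state of the chain: each gadget runs its own copy of a fixed local walk, `clock j` being the
number of steps made by gadget `j`, and `active` is the gadget that made the last step. -/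
structure ChainState (m : ℕ) where
  active : Fin m
  clock : Fin m → ℕ

namespace ChainState

variable {k m : ℕ} {h : ℕ → Fin (k + 1)} {c : ChainState m} {j : Fin m} {x : Fin (k + 1)}

/-- The location of the local walk `h` of gadget `j`, relative to that gadget. -/
def localPos (h : ℕ → Fin (k + 1)) (c : ChainState m) (j : Fin m) : Fin (k + 1) :=
  h (c.clock j)

/-- The vertex of the chain that is occupied in state `c`. -/
def position (h : ℕ → Fin (k + 1)) (c : ChainState m) : Fin (k * m + 1) :=
  chainVertex c.active (c.localPos h c.active)

/-- The gadget that makes the next step: the walk changes gadgets whenever it is at a shared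
port. -/
def next (h : ℕ → Fin (k + 1)) (c : ChainState m) : Fin m :=
  if hc : c.localPos h c.active = Fin.last k ∧ (c.active : ℕ) + 1 < m then ⟨c.active + 1, hc.2⟩
  else if c.localPos h c.active = 0 then ⟨c.active - 1, by omega⟩
  else c.active

/-- The state after one step of the gadget `c.next h`. -/
def step (h : ℕ → Fin (k + 1)) (c : ChainState m) : ChainState m where
  active := c.next h
  clock := Function.update c.clock (c.next h) (c.clock (c.next h) + 1)

/-- The invariant of the counter: the gadgets before the active one are parked at their right
port, those after it at their left port, and a gadget departs from its left port at most once per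
visit of its predecessor to the right port. -/
structure IsConsistent (h : ℕ → Fin (k + 1)) (c : ChainState m) : Prop where
  parked_right : ∀ j < c.active, c.localPos h j = Fin.last k
  parked_left : ∀ j > c.active, c.localPos h j = 0
  count_le (i j : Fin m) (hij : (i : ℕ) + 1 = j) : Nat.count (h · = 0) (c.clock j) ≤
    Nat.count (h · = Fin.last k) (c.clock i) + if i < c.active then 1 else 0

theorem next_cases (h : ℕ → Fin (k + 1)) (c : ChainState m) :
    ((c.next h : ℕ) = c.active + 1 ∧ c.localPos h c.active = Fin.last k) ∨
    ((c.next h : ℕ) + 1 = c.active ∧ c.localPos h c.active = 0) ∨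
    (c.next h = c.active ∧ (c.localPos h c.active = Fin.last k → ¬ (c.active : ℕ) + 1 < m) ∧
      (c.localPos h c.active = 0 → (c.active : ℕ) = 0)) := by
  unfold next
  split_ifs with hlast hzero
  · exact .inl ⟨rfl, hlast.1⟩
  · rcases Nat.eq_zero_or_pos c.active with hact | hact
    · exact .inr (.inr ⟨Fin.ext (by simp [hact]), not_and.mp hlast, fun _ => hact⟩)
    · exact .inr (.inl ⟨Nat.sub_add_cancel hact, hzero⟩)
  · exact .inr (.inr ⟨rfl, not_and.mp hlast, fun h0 => absurd h0 hzero⟩)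

theorem clock_step_next : (c.step h).clock (c.next h) = c.clock (c.next h) + 1 :=
  Function.update_self ..

theorem clock_step_of_ne (hj : j ≠ c.next h) : (c.step h).clock j = c.clock j :=
  Function.update_of_ne hj ..

theorem localPos_step_of_ne (hj : j ≠ c.next h) : (c.step h).localPos h j = c.localPos h j :=
  congrArg h (clock_step_of_ne hj)

theorem position_step :
    (c.step h).position h = chainVertex (c.next h) (h (c.clock (c.next h) + 1)) := by
  rw [← clock_step_next]
  rfl

theorem count_clock_step (h : ℕ → Fin (k + 1)) (c : ChainState m) (j : Fin m) (x : Fin (k + 1)) :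
    Nat.count (h · = x) ((c.step h).clock j) = Nat.count (h · = x) (c.clock j) +
      if j = c.next h ∧ c.localPos h j = x then 1 else 0 := by
  rcases eq_or_ne j (c.next h) with rfl | hj
  · simp [clock_step_next, Nat.count_succ, localPos]
  · simp [clock_step_of_ne hj, hj]

theorem eq_next_of_position_eq (hk : 0 < k) (hpos : c.position h = chainVertex j x)
    (hj : j ≠ c.active) : j = c.next h := by
  have hports : (0 : Fin (k + 1)) ≠ Fin.last k := Fin.zero_eq_last_iff.not.mpr hk.ne'
  have hnext := c.next_cases h
  rcases (chainVertex_eq_iff hk).mp hpos with hact | hact | hact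
  · exact absurd hact.1.symm hj
  · have := j.isLt
    grind
  · grind

namespace IsConsistent

theorem position_eq_next (hc : c.IsConsistent h) :
    c.position h = chainVertex (c.next h) (c.localPos h (c.next h)) := by
  rcases c.next_cases h with ⟨hn, hp⟩ | ⟨hn, hp⟩ | ⟨hn, -⟩
  · rw [position, hp, hc.parked_left _ (Fin.lt_def.mpr (by omega)), chainVertex_last hn.symm]
  · rw [position, hp, hc.parked_right _ (Fin.lt_def.mpr (by omega)), chainVertex_last hn]
  · rw [hn, position]

theorem localPos_eq_of_position_eq (hk : 0 < k) (hc : c.IsConsistent h)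
    (hpos : c.position h = chainVertex j x) : c.localPos h j = x := by
  rcases (chainVertex_eq_iff hk).mp hpos with ⟨rfl, hx⟩ | ⟨hj, -, rfl⟩ | ⟨hj, -, rfl⟩
  · exact hx
  · exact hc.parked_left j (Fin.lt_def.mpr (by omega))
  · exact hc.parked_right j (Fin.lt_def.mpr (by omega))

theorem parked_right_step (hc : c.IsConsistent h) (hj : j < c.next h) :
    (c.step h).localPos h j = Fin.last k := by
  rw [localPos_step_of_ne hj.ne]
  rcases eq_or_ne j c.active with rfl | hja
  · rcases c.next_cases h with hn | hn | hn <;> grind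
  · rcases c.next_cases h with hn | hn | hn <;> exact hc.parked_right j (by omega)

theorem parked_left_step (hc : c.IsConsistent h) (hj : c.next h < j) :
    (c.step h).localPos h j = 0 := by
  rw [localPos_step_of_ne hj.ne']
  rcases eq_or_ne j c.active with rfl | hja
  · rcases c.next_cases h with hn | hn | hn <;> grind
  · rcases c.next_cases h with hn | hn | hn <;> exact hc.parked_left j (by omega)

/-- Gadget `j` departs from its left port only when the activity passes from its predecessor `i`
to `j`, and when the activity passes back, the step of `i` completes a visit to its right port. -/
theorem count_le_step (hk : 0 < k) (hc : c.IsConsistent h) {i j : Fin m} (hij : (i : ℕ) + 1 = j) :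
    Nat.count (h · = 0) ((c.step h).clock j) ≤
      Nat.count (h · = Fin.last k) ((c.step h).clock i) + if i < c.next h then 1 else 0 := by
  have hports : (0 : Fin (k + 1)) ≠ Fin.last k := Fin.zero_eq_last_iff.not.mpr hk.ne'
  have hcount := hc.count_le i j hij
  have hright := hc.parked_right
  rw [count_clock_step, count_clock_step]
  rcases c.next_cases h with hn | hn | hn <;> grind

theorem step (hk : 0 < k) (hc : c.IsConsistent h) : (c.step h).IsConsistent h where
  parked_right _ hj := hc.parked_right_step hj
  parked_left _ hj := hc.parked_left_step hj
  count_le _ _ hij := hc.count_le_step hk hij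

end IsConsistent

/-- The state after `t` steps of the walk that starts at vertex `0` of the chain. -/
def run (h : ℕ → Fin (k + 1)) (m : ℕ) [NeZero m] : ℕ → ChainState m
  | 0 => ⟨0, fun _ => 0⟩
  | t + 1 => (run h m t).step h

theorem isConsistent_run [NeZero m] (hk : 0 < k) (h0 : h 0 = 0) (t : ℕ) :
    (run h m t).IsConsistent h := by
  induction t with
  | zero => exact ⟨fun j hj => absurd hj (Fin.not_lt_zero j), fun _ _ => h0, by simp [run]⟩
  | succ t ih => exact ih.step hk

theorem clock_run_le_succ [NeZero m] (t : ℕ) :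
    (run h m t).clock j ≤ (run h m (t + 1)).clock j ∧
      (run h m (t + 1)).clock j ≤ (run h m t).clock j + 1 := by
  rcases eq_or_ne j ((run h m t).next h) with rfl | hj
  · simp [run, clock_step_next]
  · simp [run, clock_step_of_ne hj]

theorem monotone_clock_run [NeZero m] (j : Fin m) : Monotone fun t => (run h m t).clock j :=
  monotone_nat_of_le_succ fun t => (clock_run_le_succ t).1

theorem clock_run_le [NeZero m] (t : ℕ) : (run h m t).clock j ≤ t := by
  induction t with
  | zero => rfl
  | succ t ih => exact (clock_run_le_succ t).2.trans (Nat.succ_le_succ ih)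

end ChainState

/-- The walk on the chain of `m` gadgets in which every gadget follows `h`. -/
def chainWalk {k : ℕ} (h : ℕ → Fin (k + 1)) (m : ℕ) [NeZero m] (t : ℕ) : Fin (k * m + 1) :=
  (ChainState.run h m t).position h

namespace IsCounterGadget

open ChainState

variable {k m : ℕ} [NeZero m] {H : SimpleGraph (Fin (k + 1))} {h : ℕ → Fin (k + 1)}
  {j : Fin m} {x y : Fin (k + 1)} {t : ℕ}

theorem pos (hg : IsCounterGadget H h) : 0 < k := by
  by_contra hk
  obtain rfl : k = 0 := by omega
  simpa using hg.doubling 0 hg.zero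

theorem isConsistent_run (hg : IsCounterGadget H h) (t : ℕ) : (run h m t).IsConsistent h :=
  ChainState.isConsistent_run hg.pos hg.zero t

/-- A gadget moves only when the chain walk moves inside it, so that every vertex it passes is
visited by the chain walk. -/
theorem exists_chainWalk_eq {t₁ s : ℕ} (ht : t₁ ≤ t)
    (hw : chainWalk h m t₁ = chainVertex j (h ((run h m t₁).clock j)))
    (hs₁ : (run h m t₁).clock j ≤ s) (hs : s ≤ (run h m t).clock j) :
    ∃ t₂, t₁ ≤ t₂ ∧ t₂ ≤ t ∧ chainWalk h m t₂ = chainVertex j (h s) := by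
  induction t, ht using Nat.le_induction with
  | base => exact ⟨t₁, le_rfl, le_rfl, by rw [hw, le_antisymm hs₁ hs]⟩
  | succ t ht ih =>
    by_cases hst : s ≤ (run h m t).clock j
    · obtain ⟨t₂, h₁, h₂, h₃⟩ := ih hst
      exact ⟨t₂, h₁, h₂.trans (Nat.le_succ t), h₃⟩
    · have hnext : j = (run h m t).next h := by
        by_contra hj
        exact hst (hs.trans_eq (clock_step_of_ne hj))
      obtain rfl : s = (run h m (t + 1)).clock j := by
        have := (clock_run_le_succ (h := h) (j := j) t).2
        omega
      exact ⟨t + 1, ht.trans (Nat.le_succ t), le_rfl, hnext ▸ rfl⟩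

theorem revisitedSince_chainWalk (hg : IsCounterGadget H h)
    (hxy : RevisitedSince h ((run h m t).clock j) x y) :
    RevisitedSince (chainWalk h m) t (chainVertex j x) (chainVertex j y) := by
  intro t₁ ht₁ hw
  have hloc : h ((run h m t₁).clock j) = x :=
    (hg.isConsistent_run t₁).localPos_eq_of_position_eq hg.pos hw
  obtain ⟨s, hs₁, hs, rfl⟩ := hxy _ (monotone_clock_run j ht₁) hloc
  exact exists_chainWalk_eq ht₁ (hw.trans (by rw [hloc])) hs₁ hs

theorem chainGraph_adj_chainWalk (hg : IsCounterGadget H h) (t : ℕ) :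
    (chainGraph H m).Adj (chainWalk h m t) (chainWalk h m (t + 1)) :=
  chainGraph_adj.mpr ⟨_, _, _, hg.isLRVWalk.adj _,
    (hg.isConsistent_run t).position_eq_next.symm, position_step.symm⟩

/-- After a departure from a port into another gadget, the only neighbour of the port in the
gadget just left is the vertex from which the walk came. -/
theorem revisitedSince_of_next_ne (hg : IsCounterGadget H h)
    (hnext : (run h m t).next h ≠ (run h m t).active)
    (hy : H.Adj ((run h m t).localPos h (run h m t).active) y) :
    RevisitedSince (chainWalk h m) t (chainWalk h m (t + 1))
      (chainVertex (run h m t).active y) := by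
  have hleaf : (H.neighborSet ((run h m t).localPos h (run h m t).active)).Subsingleton := by
    rcases (run h m t).next_cases h with hn | hn | hn
    · exact hn.2 ▸ hg.right_leaf
    · exact hn.2 ▸ hg.left_leaf
    · exact absurd hn.1 hnext
  cases t with
  | zero =>
    have hports : (0 : Fin (k + 1)) ≠ Fin.last k := Fin.zero_eq_last_iff.not.mpr hg.pos.ne'
    have hstart : (run h m 0).localPos h (run h m 0).active = 0 := hg.zero
    have hactive : ((run h m 0).active : ℕ) = 0 := rfl
    have := (run h m 0).next_cases h
    grind
  | succ t =>
    have hprev : chainWalk h m t = chainVertex (run h m (t + 1)).active y := by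
      rw [chainWalk, (hg.isConsistent_run t).position_eq_next]
      refine congrArg (chainVertex ((run h m t).next h)) (hleaf ?_ hy)
      have := hg.isLRVWalk.adj ((run h m t).clock ((run h m t).next h))
      rw [← clock_step_next] at this
      exact this.symm
    rw [← hprev]
    exact revisitedSince_self.succ (hg.chainGraph_adj_chainWalk (t + 1)).ne

theorem isLRVWalk_chainWalk (hg : IsCounterGadget H h) :
    IsLRVWalk (chainGraph H m) (chainWalk h m) := by
  refine ⟨hg.chainGraph_adj_chainWalk, fun t u hu => ?_⟩
  obtain ⟨j, x, y, hxy, hx, rfl⟩ := chainGraph_adj.mp hu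
  have hc := hg.isConsistent_run (m := m) t
  have hloc := hc.localPos_eq_of_position_eq hg.pos hx.symm
  subst hloc
  by_cases hj : j = (run h m t).next h
  · subst hj
    have hstep : chainWalk h m (t + 1) = _ := position_step
    rw [hstep]
    exact hg.revisitedSince_chainWalk (hg.isLRVWalk.revisitedSince _ _ hxy)
  · obtain rfl : j = (run h m t).active := by
      by_contra hja
      exact hj (eq_next_of_position_eq hg.pos hx.symm hja)
    exact hg.revisitedSince_of_next_ne (Ne.symm hj) hxy

theorem two_pow_le_count (hg : IsCounterGadget H h)
    (hpark : ∀ j, (run h m t).localPos h j = Fin.last k) (d : ℕ) (j : Fin m) (hd : j + d + 1 = m) :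
    2 ^ (d + 1) ≤ Nat.count (h · = 0) ((run h m t).clock j) := by
  have hdouble := hg.doubling _ (hpark j)
  induction d generalizing j with
  | zero => omega
  | succ d ih =>
    have hsucc : (j : ℕ) + 1 < m := by omega
    have hle := (hg.isConsistent_run t).count_le j ⟨j + 1, hsucc⟩ rfl
    have := ih ⟨j + 1, hsucc⟩ (by simp; omega) (hg.doubling _ (hpark _))
    split_ifs at hle <;> omega

theorem two_pow_le_of_chainWalk_eq_last (hg : IsCounterGadget H h)
    (ht : chainWalk h m t = Fin.last (k * m)) : 2 ^ m ≤ t := by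
  have hm := NeZero.pos m
  have hc := hg.isConsistent_run (m := m) t
  have hports : Fin.last k ≠ 0 := Fin.last_eq_zero_iff.not.mpr hg.pos.ne'
  let last : Fin m := ⟨m - 1, Nat.sub_one_lt_of_lt hm⟩
  have hlast : chainVertex last (Fin.last k) = Fin.last (k * m) :=
    Fin.ext (by simp [last, ← Nat.mul_succ, Nat.sub_add_cancel hm])
  have hactive : (run h m t).active = last ∧
      (run h m t).localPos h (run h m t).active = Fin.last k := by
    rcases (chainVertex_eq_iff hg.pos).mp (ht.trans hlast.symm) with hact | hact | hact
    · exact hact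
    · exact absurd hact.2.2 hports
    · have := (run h m t).active.isLt
      have : (last : ℕ) = m - 1 := rfl
      omega
  have hpark (j : Fin m) : (run h m t).localPos h j = Fin.last k := by
    rcases (show j ≤ last from Nat.le_sub_one_of_lt j.isLt).lt_or_eq with hj | rfl
    · exact hc.parked_right j (hactive.1 ▸ hj)
    · exact hactive.1 ▸ hactive.2
  calc 2 ^ m = 2 ^ (m - 1 + 1) := by rw [Nat.sub_add_cancel hm]
    _ ≤ Nat.count (h · = 0) ((run h m t).clock 0) :=
      hg.two_pow_le_count hpark (m - 1) 0 (by simp; omega)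
    _ ≤ (run h m t).clock 0 := Nat.count_le _
    _ ≤ t := clock_run_le t

theorem chainWalk_ne_last (hg : IsCounterGadget H h)
    (ht : (t : ℝ) < 2 ^ (((k : ℝ) + 1)⁻¹ * (k * m + 1 : ℕ))) :
    chainWalk h m t ≠ Fin.last (k * m) := by
  intro hlast
  have hm : (1 : ℝ) ≤ m := by exact_mod_cast NeZero.one_le (n := m)
  have hexp : ((k : ℝ) + 1)⁻¹ * (k * m + 1 : ℕ) ≤ m := by
    rw [inv_mul_le_iff₀ (by positivity)]
    push_cast
    linarith
  refine ht.not_ge ?_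
  calc (2 : ℝ) ^ (((k : ℝ) + 1)⁻¹ * (k * m + 1 : ℕ)) ≤ 2 ^ (m : ℝ) :=
        Real.rpow_le_rpow_of_exponent_le one_le_two hexp
    _ = (2 ^ m : ℕ) := by rw [Real.rpow_natCast]; push_cast; rfl
    _ ≤ t := by exact_mod_cast hg.two_pow_le_of_chainWalk_eq_last hlast

end IsCounterGadget

/-- The pentagon `2, 4, 3, 6, 5`, a vertex `1` adjacent to `4` and `5`, and two pendant vertices,
the ports `0` (at `2`) and `7` (at `3`). -/
def gadget : SimpleGraph (Fin 8) :=
  .fromEdgeSet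
    ({s(2, 4), s(4, 3), s(3, 6), s(6, 5), s(5, 2), s(1, 4), s(1, 5), s(0, 2), s(3, 7)} :
      Finset (Sym2 (Fin 8)))

instance : DecidableRel gadget.Adj := by
  unfold gadget
  infer_instance

/-- The LRV-v walk of period `20` on `gadget` that makes it a counter. -/
def gadgetWalk (s : ℕ) : Fin 8 :=
  ![0, 2, 4, 3, 6, 5, 1, 4, 2, 0, 2, 5, 6, 3, 7, 3, 4, 1, 5, 2] (Fin.ofNat 20 s)

theorem gadget_connected : gadget.Connected := by
  decide +kernel

theorem gadget_ncard_neighborSet_le (x : Fin 8) : (gadget.neighborSet x).ncard ≤ 3 := by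
  rw [Set.ncard_eq_toFinset_card']
  decide +revert +kernel

theorem gadgetWalk_periodic : Function.Periodic gadgetWalk 20 := by
  intro s
  simp [gadgetWalk, Fin.ofNat]

theorem isLRVWalk_gadgetWalk : IsLRVWalk gadget gadgetWalk :=
  isLRVWalk_of_periodic (by norm_num) gadgetWalk_periodic (by decide +kernel) (by decide +kernel)

theorem count_gadgetWalk (x : Fin 8) (q r : ℕ) : Nat.count (gadgetWalk · = x) (20 * q + r) =
    q * Nat.count (gadgetWalk · = x) 20 + Nat.count (gadgetWalk · = x) r :=
  count_mul_add_of_periodic (fun s => by rw [gadgetWalk_periodic s]) q r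

theorem two_mul_count_gadgetWalk_last {s : ℕ} (hs : gadgetWalk s = Fin.last 7) :
    2 * (Nat.count (gadgetWalk · = Fin.last 7) s + 1) = Nat.count (gadgetWalk · = 0) s := by
  have hmod : s % 20 = 14 := by
    have honly : ∀ r < 20, gadgetWalk r = Fin.last 7 → r = 14 := by decide +kernel
    exact honly _ (Nat.mod_lt _ (by norm_num)) (by rwa [gadgetWalk_periodic.map_mod_nat])
  have hlast : Nat.count (gadgetWalk · = Fin.last 7) 20 = 1 ∧
      Nat.count (gadgetWalk · = Fin.last 7) 14 = 0 := by decide +kernel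
  have hzero : Nat.count (gadgetWalk · = 0) 20 = 2 ∧
      Nat.count (gadgetWalk · = 0) 14 = 2 := by decide +kernel
  rw [← Nat.div_add_mod s 20, hmod, count_gadgetWalk, count_gadgetWalk, hlast.1, hlast.2, hzero.1,
    hzero.2]
  ring

theorem isCounterGadget_gadgetWalk : IsCounterGadget gadget gadgetWalk where
  isLRVWalk := isLRVWalk_gadgetWalk
  zero := rfl
  left_leaf _ ha _ hb := by decide +revert +kernel
  right_leaf _ ha _ hb := by decide +revert +kernel
  doubling _ hs := (two_mul_count_gadgetWalk_last hs).le

end LRV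

/-- There is a constant `c > 0` such that for infinitely many `n` there is a connected
simple graph on `n` vertices of maximum degree at most `3` and a walk following the
LRV-v (least-recently-visited vertex) policy whose cover time is at least `2 ^ (c * n)`. -/
theorem lrv_v_exponential_lower_bound :
    ∃ c : ℝ, 0 < c ∧
      ∀ N : ℕ, ∃ n : ℕ, N ≤ n ∧
        ∃ G : SimpleGraph (Fin n),
          G.Connected ∧
          (∀ v : Fin n, {u : Fin n | G.Adj v u}.ncard ≤ 3) ∧
          ∃ w : ℕ → Fin n,
            -- `w` is a walk on `G`
            (∀ t : ℕ, G.Adj (w t) (w (t + 1))) ∧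
            -- `w` follows the LRV-v policy
            (∀ t : ℕ, ∀ u : Fin n, G.Adj (w t) u →
              ∀ t₁ : ℕ, t₁ ≤ t → w t₁ = w (t + 1) →
                ∃ t₂ : ℕ, t₁ ≤ t₂ ∧ t₂ ≤ t ∧ w t₂ = u) ∧
            -- the cover time of `w` is at least `2 ^ (c * n)`
            ∃ v : Fin n, ∀ t : ℕ, (t : ℝ) < (2 : ℝ) ^ (c * n) → w t ≠ v := by
  refine ⟨((7 : ℕ) + 1)⁻¹, by positivity, fun N => ⟨7 * (N + 1) + 1, by omega, ?_⟩⟩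
  have hg := LRV.isCounterGadget_gadgetWalk
  have hw := hg.isLRVWalk_chainWalk (m := N + 1)
  exact ⟨LRV.chainGraph LRV.gadget (N + 1), LRV.chainGraph_connected LRV.gadget_connected,
    LRV.chainGraph_ncard_neighborSet_le hg.pos hg.left_leaf hg.right_leaf (by norm_num)
      LRV.gadget_ncard_neighborSet_le,
    LRV.chainWalk LRV.gadgetWalk (N + 1), hw.adj, hw.revisitedSince,
    Fin.last _, fun _ => hg.chainWalk_ne_last⟩
end

section
/- For infinitely many natural numbers n there exist a finite connected simple graph G on n vertices with maximum degree at most 3 and a walk w on G following the LRV-e policy whose cover time is at least n·(n−6)/12. (In particular, the least-recently-visited-edge strategy can take time quadratic in n to explore a graph of maximum degree 3, such as the dual graph of a triangulation of a polygonal region.) -/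
/-!
The graph is a chain of `m` triangles, joined by bridges `{3j, 3j + 1}`, where triangle `j` has
vertices `3j + 1, 3j + 2, 3j + 3`. The walk consists of sweeps that start and end at vertex `0`.
Rightwards it crosses a triangle along the single edge `{3j + 1, 3j + 3}` until it enters a new
triangle, which makes it turn back; leftwards it crosses a triangle along its two other edges. So
each sweep explores only one new triangle, sweep `k < m` takes `5k + 5` steps, and the last vertex
is not reached within fewer than `5m(m + 1) / 2` steps. The policy is respected because the edge
the walk takes is either new or no more recent than each alternative: the latter was traversed in
the previous step, on the way out, or on the way back in the previous sweep.
-/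

section Staleness

variable {V W : Type*}

/-- At time `t` the edge `e` is at least as stale as `f`: it was never traversed, or its last
traversal by the walk `w` is no later than that of `f`. -/
def StalerAt (w : ℕ → V) (t : ℕ) (e f : Sym2 V) : Prop :=
  ∀ t₁, t₁ < t → s(w t₁, w (t₁ + 1)) = e →
    ∃ t₂, t₁ ≤ t₂ ∧ t₂ < t ∧ s(w t₂, w (t₂ + 1)) = f

variable {w : ℕ → V} {t t₂ : ℕ} {e f : Sym2 V}

lemma StalerAt.refl : StalerAt w t e e :=
  fun t₁ ht he => ⟨t₁, le_rfl, ht, he⟩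

lemma stalerAt_of_not_traversed (h : ∀ t₁ < t, s(w t₁, w (t₁ + 1)) ≠ e) : StalerAt w t e f :=
  fun t₁ ht he => absurd he (h t₁ ht)

lemma stalerAt_of_not_traversed_since (ht : t₂ < t) (hf : s(w t₂, w (t₂ + 1)) = f)
    (h : ∀ t₁ < t, t₂ < t₁ → s(w t₁, w (t₁ + 1)) ≠ e) : StalerAt w t e f :=
  fun t₁ ht₁ he => ⟨t₂, not_lt.1 fun hlt => h t₁ ht₁ hlt he, ht, hf⟩

lemma StalerAt.of_comp {g : V → W} (hg : g.Injective)
    (h : StalerAt (g ∘ w) t (e.map g) (f.map g)) : StalerAt w t e f := by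
  intro t₁ ht he
  obtain ⟨t₂, hle, hlt, hf⟩ := h t₁ ht (congrArg (Sym2.map g) he)
  exact ⟨t₂, hle, hlt, Sym2.map.injective hg hf⟩

end Staleness

section Phases

variable {p : ℕ → ℕ}

/-- The time at which phase `k` starts, when phase `i` lasts `p i` steps. -/
def phaseStart (p : ℕ → ℕ) (k : ℕ) : ℕ := ∑ i ∈ Finset.range k, p i

/-- The phase to which time `t` belongs, when phase `i` lasts `p i` steps. The search bound `t` is
large enough because phases are meant to have positive length. -/
def phaseAt (p : ℕ → ℕ) (t : ℕ) : ℕ := Nat.findGreatest (phaseStart p · ≤ t) t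

lemma phaseStart_succ (k : ℕ) : phaseStart p (k + 1) = phaseStart p k + p k :=
  Finset.sum_range_succ p k

lemma phaseStart_strictMono (hp : ∀ k, 0 < p k) : StrictMono (phaseStart p) :=
  strictMono_nat_of_lt_succ fun k => by
    rw [phaseStart_succ]
    exact Nat.lt_add_of_pos_right (hp k)

lemma exists_eq_phaseStart_add (hp : ∀ k, 0 < p k) (t : ℕ) :
    ∃ k s, s < p k ∧ t = phaseStart p k + s := by
  induction t with
  | zero => exact ⟨0, 0, hp 0, rfl⟩
  | succ t ih =>
    obtain ⟨k, s, hs, rfl⟩ := ih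
    rcases Nat.lt_or_ge (s + 1) (p k) with h | h
    · exact ⟨k, s + 1, h, rfl⟩
    · exact ⟨k + 1, 0, hp (k + 1), by rw [phaseStart_succ]; omega⟩

lemma phaseAt_phaseStart_add (hp : ∀ k, 0 < p k) {k s : ℕ} (hs : s < p k) :
    phaseAt p (phaseStart p k + s) = k := by
  have hmono := phaseStart_strictMono hp
  refine Nat.findGreatest_eq_iff.2
    ⟨hmono.le_apply.trans (Nat.le_add_right _ _), fun _ => Nat.le_add_right _ _, ?_⟩
  intro n hn _
  have hnext : phaseStart p (k + 1) ≤ phaseStart p n := hmono.monotone hn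
  rw [phaseStart_succ] at hnext
  omega

variable {V : Type*} {x : ℕ → ℕ → V}

/-- The walk that runs through the walks `x 0`, `x 1`, … in turn, following `x k` for `p k`
steps. -/
def concatWalk (p : ℕ → ℕ) (x : ℕ → ℕ → V) (t : ℕ) : V :=
  x (phaseAt p t) (t - phaseStart p (phaseAt p t))

variable (hp : ∀ k, 0 < p k) (hx : ∀ k, x k (p k) = x (k + 1) 0)
include hp hx

lemma concatWalk_phaseStart_add {k s : ℕ} (hs : s ≤ p k) :
    concatWalk p x (phaseStart p k + s) = x k s := by
  rcases hs.lt_or_eq with hlt | rfl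
  · simp only [concatWalk, phaseAt_phaseStart_add hp hlt, Nat.add_sub_cancel_left]
  · rw [← phaseStart_succ, hx k, concatWalk, ← Nat.add_zero (phaseStart p (k + 1)),
      phaseAt_phaseStart_add hp (hp _), Nat.add_sub_cancel_left]

lemma concatWalk_edge {k s : ℕ} (hs : s < p k) :
    s(concatWalk p x (phaseStart p k + s), concatWalk p x (phaseStart p k + s + 1)) =
      s(x k s, x k (s + 1)) := by
  rw [concatWalk_phaseStart_add hp hx hs.le, Nat.add_assoc, concatWalk_phaseStart_add hp hx hs]

variable {k s s₂ : ℕ} {e f : Sym2 V}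

lemma stalerAt_concatWalk_of_same_phase (hs : s ≤ p k) (hs₂ : s₂ < s)
    (hf : s(x k s₂, x k (s₂ + 1)) = f)
    (he : ∀ s₁ < s, s₂ < s₁ → s(x k s₁, x k (s₁ + 1)) ≠ e) :
    StalerAt (concatWalk p x) (phaseStart p k + s) e f := by
  refine stalerAt_of_not_traversed_since (Nat.add_lt_add_left hs₂ _)
    ((concatWalk_edge hp hx (hs₂.trans_le hs)).trans hf) fun t₁ ht₁ ht₂ => ?_
  obtain ⟨s₁, rfl⟩ := Nat.exists_eq_add_of_le ((Nat.le_add_right _ _).trans ht₂.le)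
  rw [concatWalk_edge hp hx (by omega)]
  exact he s₁ (by omega) (by omega)

lemma stalerAt_concatWalk_of_previous_phase (hs : s ≤ p (k + 1)) (hs₂ : s₂ < p k)
    (hf : s(x k s₂, x k (s₂ + 1)) = f)
    (he : ∀ s₁ < p k, s₂ < s₁ → s(x k s₁, x k (s₁ + 1)) ≠ e)
    (he' : ∀ s₁ < s, s(x (k + 1) s₁, x (k + 1) (s₁ + 1)) ≠ e) :
    StalerAt (concatWalk p x) (phaseStart p (k + 1) + s) e f := by
  have hstart : phaseStart p (k + 1) = phaseStart p k + p k := phaseStart_succ k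
  refine stalerAt_of_not_traversed_since (by omega)
    ((concatWalk_edge hp hx hs₂).trans hf) fun t₁ ht₁ ht₂ => ?_
  rcases Nat.lt_or_ge t₁ (phaseStart p (k + 1)) with hlt | hge
  · obtain ⟨s₁, rfl⟩ := Nat.exists_eq_add_of_le ((Nat.le_add_right _ _).trans ht₂.le)
    rw [concatWalk_edge hp hx (by omega)]
    exact he s₁ (by omega) (by omega)
  · obtain ⟨s₁, rfl⟩ := Nat.exists_eq_add_of_le hge
    rw [concatWalk_edge hp hx (by omega)]
    exact he' s₁ (by omega)

lemma stalerAt_concatWalk_of_not_traversed (hs : s ≤ p k)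
    (he : ∀ i < k, ∀ s₁ < p i, s(x i s₁, x i (s₁ + 1)) ≠ e)
    (he' : ∀ s₁ < s, s(x k s₁, x k (s₁ + 1)) ≠ e) :
    StalerAt (concatWalk p x) (phaseStart p k + s) e f := by
  refine stalerAt_of_not_traversed fun t₁ ht₁ => ?_
  obtain ⟨i, s₁, hs₁, rfl⟩ := exists_eq_phaseStart_add hp t₁
  rw [concatWalk_edge hp hx hs₁]
  rcases lt_trichotomy i k with hik | rfl | hki
  · exact he i hik s₁ hs₁
  · exact he' s₁ (by omega)
  · have hnext : phaseStart p (k + 1) ≤ phaseStart p i := (phaseStart_strictMono hp).monotone hki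
    rw [phaseStart_succ] at hnext
    omega

end Phases

section TriangleChain

/-- The infinite chain of triangles `{3j + 1, 3j + 2, 3j + 3}` joined by the bridges
`{3j, 3j + 1}`; its first `3m + 2` vertices induce a chain of `m` triangles with a pendant edge at
each end. -/
def triangleChain : SimpleGraph ℕ :=
  SimpleGraph.fromRel fun a b => b = a + 1 ∨ a % 3 = 1 ∧ b = a + 2

lemma triangleChain_adj {a b : ℕ} :
    triangleChain.Adj a b ↔
      b = a + 1 ∨ a = b + 1 ∨ (a % 3 = 1 ∧ b = a + 2) ∨ (b % 3 = 1 ∧ a = b + 2) := by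
  simp only [triangleChain, SimpleGraph.fromRel_adj]
  omega

lemma triangleChain_comap_connected (n : ℕ) :
    (triangleChain.comap (Fin.val : Fin (n + 1) → ℕ)).Connected :=
  (SimpleGraph.pathGraph_connected n).mono fun a b hab => by
    rw [SimpleGraph.pathGraph_adj] at hab
    rw [SimpleGraph.comap_adj, triangleChain_adj]
    omega

lemma triangleChain_neighborSet_subset (v : ℕ) :
    triangleChain.neighborSet v ⊆
      ({v - 1, v + 1, if v % 3 = 1 then v + 2 else v - 2} : Finset ℕ) := by
  intro u hu
  rw [SimpleGraph.mem_neighborSet, triangleChain_adj] at hu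
  simp only [Finset.coe_insert, Finset.coe_singleton, Set.mem_insert_iff, Set.mem_singleton_iff]
  split_ifs <;> omega

lemma triangleChain_comap_ncard_le_three {V : Type*} {g : V → ℕ} (hg : g.Injective) (v : V) :
    {u | (triangleChain.comap g).Adj v u}.ncard ≤ 3 := by
  refine (Set.ncard_le_ncard_of_injOn g
    (fun u hu => triangleChain_neighborSet_subset (g v) hu) hg.injOn).trans ?_
  rw [Set.ncard_coe_finset]
  exact Finset.card_le_three

end TriangleChain

section Sweeps

variable {m k s j u v : ℕ}

/-- The number of steps of sweep `k` on the chain of `m` triangles: there is a new triangle to turn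
around in as long as `k < m`, and from then on the walk turns at the last vertex `3m + 1`. -/
def sweepLength (m k : ℕ) : ℕ := min (5 * k + 5) (5 * m + 2)

/-- The position after `s` steps of sweep `k` on the chain of `m` triangles, `s ≤ sweepLength m k`.
The first term of the minimum is the way out, in which steps `2j` and `2j + 1` start at `3j` and
`3j + 1`; the second is the way back, which visits every vertex. -/
def sweep (m k s : ℕ) : ℕ :=
  min (s + s / 2) (sweepLength m k - s)

/-- The walk on the chain of `m` triangles that performs the sweeps `0`, `1`, … in turn. -/
def sweepWalk (m : ℕ) : ℕ → ℕ := concatWalk (sweepLength m) (sweep m)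

lemma sweepLength_pos (m k : ℕ) : 0 < sweepLength m k := by
  unfold sweepLength
  omega

lemma sweep_sweepLength (m k : ℕ) : sweep m k (sweepLength m k) = sweep m (k + 1) 0 := by
  unfold sweep sweepLength
  omega

lemma sweep_le (m k s : ℕ) : sweep m k s ≤ 3 * m + 1 := by
  unfold sweep sweepLength
  omega

lemma sweep_adj (hs : s < sweepLength m k) :
    triangleChain.Adj (sweep m k s) (sweep m k (s + 1)) := by
  rw [triangleChain_adj]
  unfold sweep sweepLength at *
  omega

lemma sweep_even (hk : j ≤ k) (hm : j ≤ m) : sweep m k (2 * j) = 3 * j := by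
  unfold sweep sweepLength
  omega

lemma sweep_odd (hk : j ≤ k) (hm : j ≤ m) : sweep m k (2 * j + 1) = 3 * j + 1 := by
  unfold sweep sweepLength
  omega

lemma sweep_odd_succ (hk : j ≤ k) (hm : j < m) : sweep m k (2 * j + 1 + 1) = 3 * j + 3 := by
  unfold sweep sweepLength
  omega

lemma sweep_leftwards (hk : v ≤ 3 * k + 3) (hm : v ≤ 3 * m + 1) :
    sweep m k (sweepLength m k - v) = v := by
  unfold sweep sweepLength
  omega

lemma sweep_leftwards_succ (hk : v < 3 * k + 3) (hm : v < 3 * m + 1) :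
    sweep m k (sweepLength m k - (v + 1) + 1) = v := by
  unfold sweep sweepLength
  omega

lemma sweepWalk_phaseStart_add (hs : s ≤ sweepLength m k) :
    sweepWalk m (phaseStart (sweepLength m) k + s) = sweep m k s :=
  concatWalk_phaseStart_add (sweepLength_pos m) (sweep_sweepLength m) hs

lemma sweepWalk_le (m t : ℕ) : sweepWalk m t ≤ 3 * m + 1 :=
  sweep_le ..

lemma sweepWalk_adj (m t : ℕ) : triangleChain.Adj (sweepWalk m t) (sweepWalk m (t + 1)) := by
  obtain ⟨k, s, hs, rfl⟩ := exists_eq_phaseStart_add (sweepLength_pos m) t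
  rw [sweepWalk_phaseStart_add hs.le, Nat.add_assoc, sweepWalk_phaseStart_add hs]
  exact sweep_adj hs

lemma stalerAt_bridge_rightwards (hk : j < k) (hm : j < m) :
    StalerAt (sweepWalk m) (phaseStart (sweepLength m) k + (2 * j + 2))
      s(3 * j + 3, 3 * j + 4) s(3 * j + 3, 3 * j + 2) := by
  have hs : 2 * j + 2 ≤ sweepLength m k := by unfold sweepLength; omega
  obtain ⟨k, rfl⟩ := Nat.exists_eq_add_one.2 (Nat.zero_lt_of_lt hk)
  rcases (Nat.le_of_lt_succ hk).lt_or_eq with h | rfl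
  · -- On its way back, sweep `k` left the bridge along `{3j + 3, 3j + 2}`.
    refine stalerAt_concatWalk_of_previous_phase (sweepLength_pos m) (sweep_sweepLength m)
      (s₂ := sweepLength m k - (3 * j + 3)) hs ?_ ?_ ?_ ?_ <;>
    simp only [ne_eq, Sym2.eq_iff, sweep, sweepLength] <;> omega
  · apply stalerAt_concatWalk_of_not_traversed (sweepLength_pos m) (sweep_sweepLength m) hs <;>
    simp only [ne_eq, Sym2.eq_iff, sweep, sweepLength] <;> omega

lemma stalerAt_triangle_rightwards (hk : j ≤ k) (hm : j < m) :
    StalerAt (sweepWalk m) (phaseStart (sweepLength m) k + (2 * j + 1))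
      s(3 * j + 1, 3 * j + 3) s(3 * j + 1, 3 * j + 2) := by
  have hs : 2 * j + 1 ≤ sweepLength m k := by unfold sweepLength; omega
  rcases hk.lt_or_eq with h | rfl
  · obtain ⟨k, rfl⟩ := Nat.exists_eq_add_one.2 (Nat.zero_lt_of_lt h)
    -- Sweep `k` took `{3j + 1, 3j + 3}` on its way out and `{3j + 1, 3j + 2}` on its way back.
    refine stalerAt_concatWalk_of_previous_phase (sweepLength_pos m) (sweep_sweepLength m)
      (s₂ := sweepLength m k - (3 * j + 2)) hs ?_ ?_ ?_ ?_ <;>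
    simp only [ne_eq, Sym2.eq_iff, sweep, sweepLength] <;> omega
  · apply stalerAt_concatWalk_of_not_traversed (sweepLength_pos m) (sweep_sweepLength m) hs <;>
    simp only [ne_eq, Sym2.eq_iff, sweep, sweepLength] <;> omega

lemma stalerAt_new_triangle_leftwards (m k : ℕ) (f : Sym2 ℕ) :
    StalerAt (sweepWalk m) (phaseStart (sweepLength m) k + (sweepLength m k - (3 * k + 3)))
      s(3 * k + 3, 3 * k + 2) f := by
  apply stalerAt_concatWalk_of_not_traversed (sweepLength_pos m) (sweep_sweepLength m)
    (Nat.sub_le _ _) <;>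
  simp only [ne_eq, Sym2.eq_iff, sweep, sweepLength] <;> omega

lemma stalerAt_triangle_leftwards (hk : j ≤ k) (hm : j < m) :
    StalerAt (sweepWalk m) (phaseStart (sweepLength m) k + (sweepLength m k - (3 * j + 3)))
      s(3 * j + 3, 3 * j + 2) s(3 * j + 3, 3 * j + 1) := by
  apply stalerAt_concatWalk_of_same_phase (sweepLength_pos m) (sweep_sweepLength m)
    (s₂ := 2 * j + 1) (Nat.sub_le _ _) <;>
  simp only [ne_eq, Sym2.eq_iff, sweep, sweepLength] <;> omega

lemma stalerAt_bridge_leftwards (hk : j ≤ k) (hm : j < m) :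
    StalerAt (sweepWalk m) (phaseStart (sweepLength m) k + (sweepLength m k - (3 * j + 1)))
      s(3 * j + 1, 3 * j) s(3 * j + 1, 3 * j + 3) := by
  apply stalerAt_concatWalk_of_same_phase (sweepLength_pos m) (sweep_sweepLength m)
    (s₂ := 2 * j + 1) (Nat.sub_le _ _) <;>
  simp only [ne_eq, Sym2.eq_iff, sweep, sweepLength] <;> omega

lemma stalerAt_previous_edge {a b : ℕ} (hs : s + 1 ≤ sweepLength m k) (ha : sweep m k s = a)
    (hb : sweep m k (s + 1) = b) (e : Sym2 ℕ) :
    StalerAt (sweepWalk m) (phaseStart (sweepLength m) k + (s + 1)) e s(b, a) := by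
  subst ha hb
  exact stalerAt_concatWalk_of_same_phase (sweepLength_pos m) (sweep_sweepLength m) hs
    (Nat.lt_succ_self s) Sym2.eq_swap fun s₁ h h' => by omega

lemma stalerAt_previous_edge_leftwards (hk : v < 3 * k + 3) (hm : v < 3 * m + 1) (e : Sym2 ℕ) :
    StalerAt (sweepWalk m) (phaseStart (sweepLength m) k + (sweepLength m k - v))
      e s(v, v + 1) := by
  have hs : sweepLength m k - v = sweepLength m k - (v + 1) + 1 := by unfold sweepLength; omega
  rw [hs]
  exact stalerAt_previous_edge (by omega) (sweep_leftwards hk hm) (sweep_leftwards_succ hk hm) e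

lemma stalerAt_bridge_rightwards_of_adj (hk : j ≤ k) (hm : j ≤ m)
    (hu : triangleChain.Adj (3 * j) u) :
    StalerAt (sweepWalk m) (phaseStart (sweepLength m) k + 2 * j)
      s(3 * j, 3 * j + 1) s(3 * j, u) := by
  rw [triangleChain_adj] at hu
  rcases j with _ | j
  · obtain rfl : u = 1 := by omega
    exact .refl
  obtain rfl | rfl | rfl : u = 3 * j + 4 ∨ u = 3 * j + 1 ∨ u = 3 * j + 2 := by omega
  · exact .refl
  · exact stalerAt_previous_edge (s := 2 * j + 1) (by unfold sweepLength; omega)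
      (by rw [sweep_odd] <;> omega) (by rw [← sweep_even hk hm]; rfl) _
  · exact stalerAt_bridge_rightwards hk hm

lemma stalerAt_triangle_rightwards_of_adj (hk : j ≤ k) (hm : j < m)
    (hu : triangleChain.Adj (3 * j + 1) u) :
    StalerAt (sweepWalk m) (phaseStart (sweepLength m) k + (2 * j + 1))
      s(3 * j + 1, 3 * j + 3) s(3 * j + 1, u) := by
  rw [triangleChain_adj] at hu
  obtain rfl | rfl | rfl : u = 3 * j + 3 ∨ u = 3 * j ∨ u = 3 * j + 2 := by omega
  · exact .refl
  · exact stalerAt_previous_edge (by unfold sweepLength; omega)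
      (sweep_even hk hm.le) (sweep_odd hk hm.le) _
  · exact stalerAt_triangle_rightwards hk hm

lemma stalerAt_leftwards_of_adj (hk : v < 3 * k + 3) (hm : v < 3 * m + 1) (hu' : u ≤ 3 * m + 1)
    (hu : triangleChain.Adj (v + 1) u) :
    StalerAt (sweepWalk m) (phaseStart (sweepLength m) k + (sweepLength m k - (v + 1)))
      s(v + 1, v) s(v + 1, u) := by
  rw [triangleChain_adj] at hu
  rcases eq_or_ne u v with rfl | huv
  · exact .refl
  obtain ⟨j, rfl | rfl | rfl⟩ : ∃ j, v = 3 * j ∨ v = 3 * j + 1 ∨ v = 3 * j + 2 :=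
    ⟨v / 3, by omega⟩
  · obtain rfl | rfl : u = 3 * j + 2 ∨ u = 3 * j + 3 := by omega
    · exact stalerAt_previous_edge_leftwards (by omega) (by omega) _
    · exact stalerAt_bridge_leftwards (by omega) (by omega)
  · obtain rfl : u = 3 * j + 3 := by omega
    exact stalerAt_previous_edge_leftwards (by omega) (by omega) _
  · obtain rfl | rfl : u = 3 * j + 4 ∨ u = 3 * j + 1 := by omega
    · rcases Nat.lt_or_ge j k with hjk | hjk
      · exact stalerAt_previous_edge_leftwards (by omega) (by omega) _
      · obtain rfl : j = k := by omega
        exact stalerAt_new_triangle_leftwards m j _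
    · exact stalerAt_triangle_leftwards (by omega) (by omega)

lemma lt_sweepLength_cases (hs : s < sweepLength m k) :
    (∃ j ≤ k, j ≤ m ∧ s = 2 * j) ∨ (∃ j ≤ k, j < m ∧ s = 2 * j + 1) ∨
      ∃ v < 3 * k + 3, v < 3 * m + 1 ∧ s = sweepLength m k - (v + 1) := by
  rcases Nat.lt_or_ge (sweepLength m k) (s + min (3 * k + 3) (3 * m + 1) + 1) with h | h
  · refine .inr (.inr ⟨sweepLength m k - s - 1, ?_⟩)
    unfold sweepLength at *
    omega
  · have h' : s / 2 ≤ k ∧ s / 2 ≤ m ∧ (s % 2 = 1 → s / 2 < m) := by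
      unfold sweepLength at *; omega
    rcases Nat.even_or_odd' s with ⟨j, rfl | rfl⟩
    · exact .inl ⟨j, by omega, by omega, rfl⟩
    · exact .inr (.inl ⟨j, by omega, by omega, rfl⟩)

lemma stalerAt_sweepWalk (m t : ℕ) (hu : triangleChain.Adj (sweepWalk m t) u)
    (hu' : u ≤ 3 * m + 1) :
    StalerAt (sweepWalk m) t s(sweepWalk m t, sweepWalk m (t + 1)) s(sweepWalk m t, u) := by
  obtain ⟨k, s, hs, rfl⟩ := exists_eq_phaseStart_add (sweepLength_pos m) t
  rw [sweepWalk_phaseStart_add hs.le] at hu ⊢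
  rw [Nat.add_assoc, sweepWalk_phaseStart_add hs]
  obtain ⟨j, hk, hm, rfl⟩ | ⟨j, hk, hm, rfl⟩ | ⟨v, hk, hm, rfl⟩ := lt_sweepLength_cases hs
  · rw [sweep_even hk hm] at hu ⊢
    rw [sweep_odd hk hm]
    exact stalerAt_bridge_rightwards_of_adj hk hm hu
  · rw [sweep_odd hk hm.le] at hu ⊢
    rw [sweep_odd_succ hk hm]
    exact stalerAt_triangle_rightwards_of_adj hk hm hu
  · rw [sweep_leftwards hk hm] at hu ⊢
    rw [sweep_leftwards_succ hk hm]
    exact stalerAt_leftwards_of_adj hk hm hu' hu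

lemma two_mul_phaseStart_sweepLength {k : ℕ} (hk : k ≤ m) :
    2 * phaseStart (sweepLength m) k = 5 * k * (k + 1) := by
  induction k with
  | zero => rfl
  | succ k ih =>
    have hlen : sweepLength m k = 5 * k + 5 := by unfold sweepLength; omega
    rw [phaseStart_succ, hlen, mul_add, ih (Nat.le_of_succ_le hk)]
    ring

lemma le_two_mul_of_sweepWalk_eq {t : ℕ} (ht : sweepWalk m t = 3 * m + 1) :
    5 * m * (m + 1) ≤ 2 * t := by
  obtain ⟨k, s, hs, rfl⟩ := exists_eq_phaseStart_add (sweepLength_pos m) t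
  rw [sweepWalk_phaseStart_add hs.le] at ht
  have hk : m ≤ k := by unfold sweep sweepLength at *; omega
  calc 5 * m * (m + 1) = 2 * phaseStart (sweepLength m) m :=
        (two_mul_phaseStart_sweepLength le_rfl).symm
    _ ≤ 2 * (phaseStart (sweepLength m) k + s) := Nat.mul_le_mul_left 2 <|
        ((phaseStart_strictMono (sweepLength_pos m)).monotone hk).trans (Nat.le_add_right _ _)

end Sweeps

/-- For infinitely many `n` there is a connected simple graph on `n` vertices of maximum
degree at most `3` and a walk following the LRV-e (least-recently-visited edge) policy
whose cover time is at least `n * (n - 6) / 12`. -/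
theorem lrv_e_quadratic_lower_bound :
    ∀ N : ℕ, ∃ n : ℕ, N ≤ n ∧
      ∃ G : SimpleGraph (Fin n),
        G.Connected ∧
        (∀ v : Fin n, {u : Fin n | G.Adj v u}.ncard ≤ 3) ∧
        ∃ w : ℕ → Fin n,
          -- `w` is a walk on `G`
          (∀ t : ℕ, G.Adj (w t) (w (t + 1))) ∧
          -- `w` follows the LRV-e policy
          (∀ t : ℕ, ∀ u : Fin n, G.Adj (w t) u →
            ∀ t₁ : ℕ, t₁ < t → s(w t₁, w (t₁ + 1)) = s(w t, w (t + 1)) →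
              ∃ t₂ : ℕ, t₁ ≤ t₂ ∧ t₂ < t ∧ s(w t₂, w (t₂ + 1)) = s(w t, u)) ∧
          -- the cover time of `w` is at least `n * (n - 6) / 12`
          ∃ v : Fin n, ∀ t : ℕ, (t : ℝ) < (n : ℝ) * ((n : ℝ) - 6) / 12 → w t ≠ v := by
  intro N
  have hlt (t : ℕ) : sweepWalk N t < 3 * N + 2 := Nat.lt_succ_of_le (sweepWalk_le N t)
  refine ⟨3 * N + 2, by omega, triangleChain.comap Fin.val, triangleChain_comap_connected _,
    triangleChain_comap_ncard_le_three Fin.val_injective, fun t => ⟨sweepWalk N t, hlt t⟩,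
    sweepWalk_adj N, fun t u hu => ?_, Fin.last _, fun t ht hlast => ?_⟩
  · exact (stalerAt_sweepWalk N t hu (Nat.le_of_lt_succ u.2)).of_comp Fin.val_injective
  · have hcover : 5 * (N : ℝ) * (N + 1) ≤ 2 * t := by
      exact_mod_cast le_two_mul_of_sweepWalk_eq (congrArg Fin.val hlast)
    push_cast at ht
    nlinarith
end

section
/- Let G be a finite simple graph, let w be a walk on G following the LFV-v policy with starting vertex s = w(0), and let δ = deg(s) ≥ 1 be the number of neighbors of s. For any time t ∈ ℕ, let g = |{t' ∈ ℕ : t' < t and w(t') = s}| be the number of visits to s that the walk has already left by time t. Then at least (g mod δ) of the neighbors u of s satisfy freq_w(u,t) ≥ ⌊g/δ⌋ + 1, and every neighbor u of s satisfies freq_w(u,t) ≥ ⌊g/δ⌋. -/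
/-!
Truncate the visit counts of the `δ` neighbors of `s` at a level `k` and add them up: the sum is
at most `δ * k`. Each departure from `s` leads to a least visited neighbor `v`, so it either raises
the sum by at least one (if the count of `v` was below `k`) or finds the sum already full (if it was
not, for then no neighbor is below `k`). Hence after `g` departures the sum is at least
`min g (δ * k)`. For `k = g / δ` this forces every neighbor up to level `k`; for `k = g / δ + 1` the
sum is at least `g`, and since the first `g / δ` levels contribute at most `δ * (g / δ)`, at least
`g % δ` neighbors reach the next level.
-/

section TruncatedSums

open Finset

variable {ι : Type*} {N : Finset ι} {f : ι → ℕ} {k : ℕ}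

theorem sum_min_le_card_mul : ∑ u ∈ N, min (f u) k ≤ #N * k :=
  sum_le_card_nsmul N _ k fun _ _ => min_le_right _ _

theorem card_mul_le_sum_min_iff : #N * k ≤ ∑ u ∈ N, min (f u) k ↔ ∀ u ∈ N, k ≤ f u := by
  have h_eq_iff := sum_eq_sum_iff_of_le (s := N) fun u _ => min_le_right (f u) k
  rw [sum_const, smul_eq_mul] at h_eq_iff
  simp only [min_eq_right_iff] at h_eq_iff
  rw [← h_eq_iff]
  exact sum_min_le_card_mul.ge_iff_eq

theorem sum_min_add_one :
    ∑ u ∈ N, min (f u) (k + 1) = ∑ u ∈ N, min (f u) k + #{u ∈ N | k + 1 ≤ f u} := by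
  rw [card_filter, ← sum_add_distrib]
  refine sum_congr rfl fun u _ => ?_
  split_ifs <;> omega

theorem mod_card_le_card_filter_of_le_sum_min {g : ℕ}
    (h : g ≤ ∑ u ∈ N, min (f u) (g / #N + 1)) : g % #N ≤ #{u ∈ N | g / #N + 1 ≤ f u} := by
  rw [sum_min_add_one] at h
  have h_le : ∑ u ∈ N, min (f u) (g / #N) ≤ #N * (g / #N) := sum_min_le_card_mul
  have h_div := Nat.div_add_mod g #N
  omega

theorem min_sum_min_add_one_le_sum_min {f' : ι → ℕ} {v : ι} (hv : v ∈ N)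
    (hmin : ∀ u ∈ N, f v ≤ f u) (hle : ∀ u ∈ N, f u ≤ f' u) (hlt : f v < f' v) :
    min (∑ u ∈ N, min (f u) k + 1) (#N * k) ≤ ∑ u ∈ N, min (f' u) k := by
  rcases lt_or_ge (f v) k with hvk | hkv
  · have h_lt : ∑ u ∈ N, min (f u) k < ∑ u ∈ N, min (f' u) k :=
      sum_lt_sum (fun u hu => min_le_min_right k (hle u hu)) ⟨v, hv, by omega⟩
    exact min_le_of_left_le h_lt
  · exact min_le_of_right_le <| card_mul_le_sum_min_iff.2 fun u hu =>
      hkv.trans <| (hmin u hu).trans (hle u hu)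

end TruncatedSums

section Visits

variable {V : Type*}

/-- The visit count `freq_w(v, t)`: the number of visits of `w` to `v` up to and including
time `t`. -/
noncomputable def visitCount (w : ℕ → V) (v : V) (t : ℕ) : ℕ :=
  {t' : ℕ | t' ≤ t ∧ w t' = v}.ncard

/-- The number of visits of `w` to `v` that have already been left by time `t`, that is, the visits
strictly before time `t`. -/
noncomputable def departureCount (w : ℕ → V) (v : V) (t : ℕ) : ℕ :=
  {t' : ℕ | t' < t ∧ w t' = v}.ncard

/-- The LFV-v policy at the single vertex `s`: whenever `w` is at `s`, it moves to an out-neighbor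
of `s` that has been visited least often so far. A `Digraph` is used because only the moves out of
`s` matter; an undirected graph enters through its adjacency relation. -/
structure FollowsLFVAt (G : Digraph V) (w : ℕ → V) (s : V) : Prop where
  adj_succ : ∀ t, w t = s → G.Adj s (w (t + 1))
  visitCount_succ_le : ∀ t, w t = s → ∀ u, G.Adj s u →
    visitCount w (w (t + 1)) t ≤ visitCount w u t

theorem departureCount_eq_count [DecidableEq V] (w : ℕ → V) (v : V) (t : ℕ) :
    departureCount w v t = Nat.count (w · = v) t := by
  rw [departureCount, Nat.count_eq_card_filter_range, ← Set.ncard_coe_finset]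
  simp

theorem visitCount_eq_departureCount_succ (w : ℕ → V) (v : V) (t : ℕ) :
    visitCount w v t = departureCount w v (t + 1) := by
  simp only [visitCount, departureCount, Nat.lt_succ_iff]

open scoped Classical in
theorem departureCount_succ (w : ℕ → V) (v : V) (t : ℕ) :
    departureCount w v (t + 1) = departureCount w v t + if w t = v then 1 else 0 := by
  simp only [departureCount_eq_count, Nat.count_succ]

theorem visitCount_le_succ (w : ℕ → V) (v : V) (t : ℕ) :
    visitCount w v t ≤ visitCount w v (t + 1) := by
  simp only [visitCount_eq_departureCount_succ, departureCount_succ _ _ (t + 1), Nat.le_add_right]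

theorem visitCount_lt_succ_self (w : ℕ → V) (t : ℕ) :
    visitCount w (w (t + 1)) t < visitCount w (w (t + 1)) (t + 1) := by
  simp [visitCount_eq_departureCount_succ, departureCount_succ _ _ (t + 1)]

theorem FollowsLFVAt.min_departureCount_le_sum_min_visitCount {G : Digraph V} {w : ℕ → V} {s : V}
    (h : FollowsLFVAt G w s) {N : Finset V} (hN : ∀ u, u ∈ N ↔ G.Adj s u) (k t : ℕ) :
    min (departureCount w s t) (N.card * k) ≤ ∑ u ∈ N, min (visitCount w u t) k := by
  induction t with
  | zero => simp [departureCount]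
  | succ t ih =>
    have h_mono : ∀ u ∈ N, visitCount w u t ≤ visitCount w u (t + 1) :=
      fun u _ => visitCount_le_succ w u t
    rw [departureCount_succ]
    split_ifs with hts
    · have h_step := min_sum_min_add_one_le_sum_min (k := k) ((hN _).2 (h.adj_succ t hts))
        (fun u hu => h.visitCount_succ_le t hts u ((hN u).1 hu)) h_mono
        (visitCount_lt_succ_self w t)
      omega
    · exact ih.trans <| Finset.sum_le_sum fun u hu => min_le_min_right k (h_mono u hu)

theorem lfv_v_neighbor_frequencies_general {G : Digraph V} {w : ℕ → V} {s : V}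
    (h : FollowsLFVAt G w s) (hδ : 1 ≤ {u | G.Adj s u}.ncard) (t : ℕ) :
    departureCount w s t % {u | G.Adj s u}.ncard ≤
      {u | G.Adj s u ∧
        departureCount w s t / {u | G.Adj s u}.ncard + 1 ≤ visitCount w u t}.ncard ∧
    ∀ u, G.Adj s u → departureCount w s t / {u | G.Adj s u}.ncard ≤ visitCount w u t := by
  obtain ⟨N, hN⟩ := (Set.finite_of_ncard_pos hδ).exists_finset
  have h_nbrs : {u | G.Adj s u} = N := by ext u; exact (hN u).symm
  rw [h_nbrs, Set.ncard_coe_finset] at hδ ⊢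
  set g := departureCount w s t
  have h_sum (k : ℕ) : min g (N.card * k) ≤ ∑ u ∈ N, min (visitCount w u t) k :=
    h.min_departureCount_le_sum_min_visitCount hN k t
  constructor
  · have h_full : g ≤ N.card * (g / N.card + 1) := (Nat.lt_mul_div_succ g hδ).le
    have h_card := mod_card_le_card_filter_of_le_sum_min ((min_eq_left h_full).ge.trans (h_sum _))
    rw [← Set.ncard_coe_finset (N.filter _)] at h_card
    simpa only [Finset.coe_filter, hN, Set.mem_ofPred_eq] using h_card
  · have h_full : N.card * (g / N.card) ≤ g := Nat.mul_div_le g N.card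
    have h_le := card_mul_le_sum_min_iff.1 ((min_eq_right h_full).ge.trans (h_sum _))
    exact fun u hu => h_le u ((hN u).2 hu)

end Visits

/-- For a walk `w` following the LFV-v policy starting at `s = w 0` with `δ = deg s ≥ 1`,
if `g` is the number of visits to `s` strictly before time `t`, then at least `g % δ`
neighbors of `s` have visit count at least `g / δ + 1` up to time `t`, and every neighbor
of `s` has visit count at least `g / δ` up to time `t`. -/
theorem lfv_v_neighbor_frequencies {V : Type*} [Fintype V] (G : SimpleGraph V)
    (w : ℕ → V)
    -- `w` is a walk on `G`
    (hwalk : ∀ t : ℕ, G.Adj (w t) (w (t + 1)))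
    -- `w` follows the LFV-v policy
    (hpol : ∀ t : ℕ, ∀ u : V, G.Adj (w t) u →
      {t' : ℕ | t' ≤ t ∧ w t' = w (t + 1)}.ncard ≤ {t' : ℕ | t' ≤ t ∧ w t' = u}.ncard)
    (s : V) (hs : w 0 = s)
    (δ : ℕ) (hδ : δ = {u : V | G.Adj s u}.ncard) (hδ1 : 1 ≤ δ)
    (t : ℕ) (g : ℕ) (hg : g = {t' : ℕ | t' < t ∧ w t' = s}.ncard) :
    g % δ ≤
      {u : V | G.Adj s u ∧ g / δ + 1 ≤ {t' : ℕ | t' ≤ t ∧ w t' = u}.ncard}.ncard ∧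
    ∀ u : V, G.Adj s u → g / δ ≤ {t' : ℕ | t' ≤ t ∧ w t' = u}.ncard := by
  subst hδ hg
  exact lfv_v_neighbor_frequencies_general (G := ⟨G.Adj⟩)
    ⟨fun t ht => ht ▸ hwalk t, fun t ht u hu => hpol t u (ht ▸ hu)⟩ hδ1 t
end

section
/- There exists a universal constant C > 0 such that the following holds. Let G be a finite connected simple graph with n vertices, maximum degree at most 3 (as is the case for the dual graph of a triangulation), and diameter d ≥ 1, and let w be a walk on G following the LFV-e policy. Then every vertex of G has latency at most C·n·d under w: for every vertex v of G and every time t ∈ ℕ there exists t' with t ≤ t' ≤ t + C·n·d such that w(t') = v. -/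
/-!
Adjacent edges have almost equal traversal counts. Fix an even level `k` and cap the count of every
edge at `k`. The steps taken along edges of count below `k` split into excursions; an excursion ends
when the walk sits at a vertex all of whose edges have count at least `k`. There the capped counts
sum to a multiple of `k`, an even number, and by parity (as for Euler tours) this can happen only at
the vertex where the excursion started. Hence a step along an edge of count at least `k` is always
taken from such a start, and a vertex that still has an edge of count below `k` never has one of
count above `k + 1`. Taking `k` just above a given count, two edges at a common vertex differ by at
most `3`.

While the walk avoids `v`, the counts of the edges at `v` are frozen, so the count of an edge with
an endpoint at distance `ℓ` from `v` grows by at most `6 * ℓ`. Since each step adds one to the count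
of some edge, this lasts for fewer than `6 * |E| * d` steps.
-/

section

variable {V : Type*} {G : SimpleGraph V} {w : ℕ → V} {e f : Sym2 V} {k t T : ℕ} {a v x : V}

/-- The number of traversals of the edge `e` by the sequence `w` before time `t`, in either
direction; this is `efreq_w(e, t)`. -/
noncomputable def traversalCount (w : ℕ → V) (e : Sym2 V) (t : ℕ) : ℕ :=
  {i : ℕ | i < t ∧ s(w i, w (i + 1)) = e}.ncard

/-- A walk on `G` following the LFV-e policy: each step uses an edge that is least traversed so far
among those at the current vertex. -/
structure IsLFVEWalk (G : SimpleGraph V) (w : ℕ → V) : Prop where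
  adj : ∀ t, G.Adj (w t) (w (t + 1))
  traversalCount_le_of_adj : ∀ t u, G.Adj (w t) u →
    traversalCount w s(w t, w (t + 1)) t ≤ traversalCount w s(w t, u) t

@[simp]
theorem traversalCount_zero (w : ℕ → V) (e : Sym2 V) : traversalCount w e 0 = 0 := by
  simp [traversalCount]

open Classical in
theorem traversalCount_succ (w : ℕ → V) (e : Sym2 V) (t : ℕ) :
    traversalCount w e (t + 1) =
      traversalCount w e t + if s(w t, w (t + 1)) = e then 1 else 0 := by
  have eq_count (t : ℕ) :
      traversalCount w e t = Nat.count (fun i ↦ s(w i, w (i + 1)) = e) t := by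
    rw [traversalCount, Nat.count_eq_card_filter_range, ← Set.ncard_coe_finset]
    simp
  rw [eq_count, eq_count, Nat.count_succ]

theorem traversalCount_eq_of_avoids (htT : t ≤ T) (hv : v ∈ e)
    (havoid : ∀ i, t ≤ i → i ≤ T → w i ≠ v) :
    traversalCount w e T = traversalCount w e t := by
  induction T, htT using Nat.le_induction with
  | base => rfl
  | succ T htT ih =>
    have hstep : s(w T, w (T + 1)) ≠ e := by
      rintro rfl
      rcases Sym2.mem_iff.1 hv with h | h
      · exact havoid T htT T.le_succ h.symm
      · exact havoid (T + 1) (by lia) le_rfl h.symm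
    rw [traversalCount_succ, if_neg hstep, add_zero,
      ih fun i hi hiT ↦ havoid i hi (by lia)]

theorem sum_traversalCount [Fintype G.edgeSet] (hw : ∀ t, G.Adj (w t) (w (t + 1))) (t : ℕ) :
    ∑ e ∈ G.edgeFinset, traversalCount w e t = t := by
  classical
  induction t with
  | zero => simp
  | succ t ih => simp [traversalCount_succ, Finset.sum_add_distrib, ih, hw t]

/-- The vertex where the current excursion at level `k` started: the endpoint of the last step
before time `t` along an edge of count at least `k`, or `w 0` if there is none. -/
noncomputable def excursionStart (w : ℕ → V) (k : ℕ) : ℕ → V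
  | 0 => w 0
  | t + 1 =>
    if traversalCount w s(w t, w (t + 1)) t < k then excursionStart w k t else w (t + 1)

open Classical in
/-- The total count of the edges at `x`, each capped at `k`. It carries the parity invariant of the
excursions at level `k`, since only steps along edges of count below `k` change it. -/
noncomputable def cappedCount (G : SimpleGraph V) [G.LocallyFinite] (w : ℕ → V) (k : ℕ) (x : V)
    (t : ℕ) : ℕ :=
  ∑ e ∈ G.incidenceFinset x, min k (traversalCount w e t)

open Classical in
theorem cappedCount_succ_of_lt [G.LocallyFinite] (hadj : G.Adj (w t) (w (t + 1)))
    (hlt : traversalCount w s(w t, w (t + 1)) t < k) (x : V) :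
    cappedCount G w k x (t + 1) =
      cappedCount G w k x t + if x = w t ∨ x = w (t + 1) then 1 else 0 := by
  have hmin (e : Sym2 V) : min k (traversalCount w e (t + 1)) =
      min k (traversalCount w e t) + if s(w t, w (t + 1)) = e then 1 else 0 := by
    rw [traversalCount_succ]
    split_ifs with he
    · subst he; lia
    · rfl
  have hmem : s(w t, w (t + 1)) ∈ G.incidenceFinset x ↔ x = w t ∨ x = w (t + 1) := by
    simp [SimpleGraph.incidenceSet, hadj]
  simp only [cappedCount, hmin, Finset.sum_add_distrib, Finset.sum_ite_eq, hmem]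

theorem cappedCount_succ_of_le [G.LocallyFinite]
    (hle : k ≤ traversalCount w s(w t, w (t + 1)) t) (x : V) :
    cappedCount G w k x (t + 1) = cappedCount G w k x t := by
  refine Finset.sum_congr rfl fun e _ ↦ ?_
  rw [traversalCount_succ]
  split_ifs with he
  · subst he; lia
  · rfl

namespace IsLFVEWalk

theorem traversalCount_le_of_mem_incidenceSet (hw : IsLFVEWalk G w)
    (he : e ∈ G.incidenceSet (w t)) :
    traversalCount w s(w t, w (t + 1)) t ≤ traversalCount w e t := by
  obtain ⟨u, rfl⟩ := he.2
  exact hw.traversalCount_le_of_adj t u he.1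

theorem even_cappedCount_of_le [G.LocallyFinite] (hw : IsLFVEWalk G w) (hk : Even k)
    (hle : k ≤ traversalCount w s(w t, w (t + 1)) t) : Even (cappedCount G w k (w t) t) :=
  Finset.even_sum _ fun e he ↦ by
    rwa [min_eq_left (hle.trans
      (hw.traversalCount_le_of_mem_incidenceSet (by simpa using he)))]

theorem even_cappedCount_iff [G.LocallyFinite] (hw : IsLFVEWalk G w) (hk : Even k) (x : V)
    (t : ℕ) : Even (cappedCount G w k x t) ↔ (x = excursionStart w k t ↔ x = w t) := by
  induction t generalizing x with
  | zero => simp [cappedCount, excursionStart]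
  | succ t ih =>
    rw [excursionStart]
    split_ifs with hlow
    · have hne := (hw.adj t).ne
      rw [cappedCount_succ_of_lt (hw.adj t) hlow, Nat.even_add, ih]
      grind
    · rw [not_lt] at hlow
      have hstart : w t = excursionStart w k t :=
        ((ih (w t)).1 (hw.even_cappedCount_of_le hk hlow)).2 rfl
      simp [cappedCount_succ_of_le hlow, ih, ← hstart]

theorem excursionStart_eq_of_le [G.LocallyFinite] (hw : IsLFVEWalk G w) (hk : Even k)
    (hle : k ≤ traversalCount w s(w t, w (t + 1)) t) : excursionStart w k t = w t :=
  (((hw.even_cappedCount_iff hk (w t) t).1 (hw.even_cappedCount_of_le hk hle)).2 rfl).symm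

open Classical in
theorem traversalCount_le_add_ite [G.LocallyFinite] (hw : IsLFVEWalk G w) (hk : Even k)
    (he : e ∈ G.incidenceSet x) (hf : f ∈ G.incidenceSet x) (hlt : traversalCount w f t < k) :
    traversalCount w e t ≤ k + if x = excursionStart w k t then 1 else 0 := by
  induction t with
  | zero => simp
  | succ t ih =>
    have hf_lt : traversalCount w f t < k := by
      rw [traversalCount_succ] at hlt
      lia
    have ih := ih hf_lt
    rw [traversalCount_succ, excursionStart]
    by_cases hlow : traversalCount w s(w t, w (t + 1)) t < k
    · rw [if_pos hlow]
      split_ifs at ih ⊢ with hstep <;> subst_vars <;> lia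
    · rw [if_neg hlow]
      rw [not_lt] at hlow
      have hx : x ≠ w t := by
        rintro rfl
        exact (hlow.trans (hw.traversalCount_le_of_mem_incidenceSet hf)).not_gt hf_lt
      rw [hw.excursionStart_eq_of_le hk hlow, if_neg hx] at ih
      by_cases hstep : s(w t, w (t + 1)) = e
      · subst hstep
        have hx' : x = w (t + 1) := (Sym2.mem_iff.1 he.2).resolve_left hx
        simpa [hx'] using ih
      · rw [if_neg hstep]
        lia

theorem traversalCount_le_add_three [G.LocallyFinite] (hw : IsLFVEWalk G w)
    (he : e ∈ G.incidenceSet x) (hf : f ∈ G.incidenceSet x) (t : ℕ) :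
    traversalCount w e t ≤ traversalCount w f t + 3 := by
  obtain ⟨k, hk, hlt, hle⟩ : ∃ k, Even k ∧ traversalCount w f t < k ∧
      k ≤ traversalCount w f t + 2 := by
    rcases Nat.even_or_odd (traversalCount w f t) with h | h
    · exact ⟨_, h.add even_two, by lia, le_rfl⟩
    · exact ⟨_, h.add_one, by lia, by lia⟩
  have hbound := hw.traversalCount_le_add_ite hk he hf hlt
  split_ifs at hbound <;> lia

-- The edge `f` must not depend on `t`: the latency bound compares two different times through it.
theorem exists_mem_incidenceSet_forall_abs_sub_le [G.LocallyFinite] (hw : IsLFVEWalk G w)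
    (p : G.Walk a v) (he : e ∈ G.incidenceSet a) :
    ∃ f ∈ G.incidenceSet v, ∀ t,
      |(traversalCount w e t : ℤ) - traversalCount w f t| ≤ 3 * p.length := by
  induction p generalizing e with
  | nil => exact ⟨e, he, by simp⟩
  | @cons a c v hac p ih =>
    obtain ⟨f, hf, hclose⟩ := ih (G.mk'_mem_incidenceSet_right_iff.2 hac)
    refine ⟨f, hf, fun t ↦ ?_⟩
    have hac_mem := G.mk'_mem_incidenceSet_left_iff.2 hac
    have hlocal : |(traversalCount w e t : ℤ) - traversalCount w s(a, c) t| ≤ 3 := by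
      have hle := hw.traversalCount_le_add_three he hac_mem t
      have hge := hw.traversalCount_le_add_three hac_mem he t
      rw [abs_le]
      lia
    calc |(traversalCount w e t : ℤ) - traversalCount w f t|
        ≤ 3 + 3 * p.length := (abs_sub_le _ _ _).trans (add_le_add hlocal (hclose t))
      _ = 3 * (p.cons hac).length := by rw [SimpleGraph.Walk.length_cons]; push_cast; ring

theorem traversalCount_le_add_dist_of_avoids [G.LocallyFinite] (hw : IsLFVEWalk G w)
    (hav : G.Reachable a v) (he : e ∈ G.incidenceSet a) (htT : t ≤ T)
    (havoid : ∀ i, t ≤ i → i ≤ T → w i ≠ v) :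
    traversalCount w e T ≤ traversalCount w e t + 6 * G.dist a v := by
  obtain ⟨p, hp⟩ := hav.exists_walk_length_eq_dist
  obtain ⟨f, hf, hclose⟩ := hw.exists_mem_incidenceSet_forall_abs_sub_le p he
  have hT := (abs_le.1 (hclose T)).2
  have ht := (abs_le.1 (hclose t)).1
  have hfrozen := traversalCount_eq_of_avoids htT hf.2 havoid
  lia

theorem lt_add_of_avoids [Fintype G.edgeSet] [G.LocallyFinite] (hw : IsLFVEWalk G w)
    (hG : G.Connected) {d : ℕ} (hd : ∀ a, G.dist a v ≤ d) (htT : t ≤ T)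
    (havoid : ∀ i, t ≤ i → i ≤ T → w i ≠ v) : T < t + 6 * G.edgeFinset.card * d := by
  have hgrowth {a : V} {e : Sym2 V} (he : e ∈ G.incidenceSet a) :=
    hw.traversalCount_le_add_dist_of_avoids (hG.preconnected a v) he htT havoid
  have hne : w t ≠ v := havoid t le_rfl htT
  have hd_pos : 0 < d := (hG.pos_dist_of_ne hne).trans_le (hd _)
  have : Nontrivial V := ⟨_, _, hne⟩
  obtain ⟨u, hvu⟩ := hG.preconnected.exists_adj_of_nontrivial v
  calc T = ∑ e ∈ G.edgeFinset, traversalCount w e T := (sum_traversalCount hw.adj T).symm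
    _ < ∑ e ∈ G.edgeFinset, (traversalCount w e t + 6 * d) := by
      refine Finset.sum_lt_sum (fun e he ↦ ?_) ⟨s(v, u), by simpa using hvu, ?_⟩
      · induction e with | _ a b =>
        have := hgrowth (G.mk'_mem_incidenceSet_left_iff.2 (by simpa using he))
        linarith [hd a]
      · have := hgrowth (G.mk'_mem_incidenceSet_left_iff.2 hvu)
        rw [SimpleGraph.dist_self] at this
        lia
    _ = t + 6 * G.edgeFinset.card * d := by
      rw [Finset.sum_add_distrib, sum_traversalCount hw.adj, Finset.sum_const, smul_eq_mul]
      ring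

end IsLFVEWalk

theorem two_mul_ncard_edgeSet_le [Fintype V] {Δ : ℕ}
    (hdeg : ∀ v, (G.neighborSet v).ncard ≤ Δ) :
    2 * G.edgeSet.ncard ≤ Δ * Fintype.card V := by
  classical
  calc 2 * G.edgeSet.ncard = ∑ v, G.degree v := by
        rw [G.sum_degrees_eq_twice_card_edges, ← G.coe_edgeFinset, Set.ncard_coe_finset]
    _ ≤ ∑ _v : V, Δ := Finset.sum_le_sum fun v _ ↦ by
        rw [← G.card_neighborFinset_eq_degree, ← Set.ncard_coe_finset, G.coe_neighborFinset]
        exact hdeg v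
    _ = Δ * Fintype.card V := by simp [mul_comm]

theorem lfv_e_vertex_latency_general [Finite V] (hG : G.Connected) (hw : IsLFVEWalk G w)
    {d : ℕ} (hd : ∀ a, G.dist a v ≤ d) (t : ℕ) :
    ∃ t', t ≤ t' ∧ t' ≤ t + 6 * G.edgeSet.ncard * d ∧ w t' = v := by
  classical
  have := Fintype.ofFinite V
  by_contra! havoid
  refine (hw.lt_add_of_avoids hG hd le_self_add havoid).ne ?_
  rw [← G.coe_edgeFinset, Set.ncard_coe_finset]

end

/-- There is a universal constant `C > 0` such that for every finite connected simple
graph `G` on `n` vertices with maximum degree at most `3` and diameter `d ≥ 1`, and every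
walk `w` on `G` following the LFV-e policy, every vertex of `G` is visited in every time
window of length `C * n * d`. -/
theorem lfv_e_vertex_latency :
    ∃ C : ℝ, 0 < C ∧
      ∀ (V : Type) [Fintype V] (G : SimpleGraph V), G.Connected →
        ∀ n : ℕ, n = Fintype.card V →
        (∀ v : V, {u : V | G.Adj v u}.ncard ≤ 3) →
        -- `d` is the diameter of `G`
        ∀ d : ℕ, IsGreatest {k : ℕ | ∃ u v : V, G.dist u v = k} d → 1 ≤ d →
        ∀ w : ℕ → V,
          -- `w` is a walk on `G`
          (∀ t : ℕ, G.Adj (w t) (w (t + 1))) →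
          -- `w` follows the LFV-e policy
          (∀ t : ℕ, ∀ u : V, G.Adj (w t) u →
            {t' : ℕ | t' < t ∧ s(w t', w (t' + 1)) = s(w t, w (t + 1))}.ncard ≤
              {t' : ℕ | t' < t ∧ s(w t', w (t' + 1)) = s(w t, u)}.ncard) →
          ∀ v : V, ∀ t : ℕ,
            ∃ t' : ℕ, t ≤ t' ∧ (t' : ℝ) ≤ (t : ℝ) + C * n * d ∧ w t' = v := by
  refine ⟨9, by norm_num, fun V _ G hG n hn hdeg d hd _ w hadj hlfv v t ↦ ?_⟩
  obtain ⟨t', htt', hle, hv⟩ :=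
    lfv_e_vertex_latency_general hG ⟨hadj, hlfv⟩ (fun a ↦ hd.2 ⟨a, v, rfl⟩) t
  have hedges : 2 * G.edgeSet.ncard ≤ 3 * n := hn ▸ two_mul_ncard_edgeSet_le hdeg
  have hbound : t' ≤ t + 9 * n * d := by nlinarith
  exact ⟨t', htt', mod_cast hbound, hv⟩
end
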